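/- Let V be a finite-dimensional real inner product space, Υ a lattice in V such that √2·Υ is even and unimodular, M, N a polarization of Υ, and k ≥ 2 an integer. Then μ(L(M,N,k)) ≥ min( k·μ(Υ), 2·min(μ(M), 2μ(Υ)) ). -/

import Mathlib

noncomputable section

open scoped RealInnerProductSpace Pointwise
open Module

variable {V : Type*} [NormedAddCommGroup V] [InnerProductSpace ℝ V]

/-- `L` is a (full) lattice in `V`: a finitely generated `ℤ`-submodule spanning `V` over `ℝ`. -/
def IsLat (L : Submodule ℤ V) : Prop :=
  L.FG ∧ Submodule.span ℝ (L : Set V) = ⊤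

/-- The lattice `L` is integral: all inner products of lattice vectors are integers. -/
def IsIntegralLat (L : Submodule ℤ V) : Prop :=
  ∀ x ∈ L, ∀ y ∈ L, ∃ n : ℤ, ⟪x, y⟫ = (n : ℝ)

/-- The lattice `L` is even: it is integral and all norms are even integers. -/
def IsEvenLat (L : Submodule ℤ V) : Prop :=
  IsIntegralLat L ∧ ∀ x ∈ L, ∃ n : ℤ, ⟪x, x⟫ = 2 * (n : ℝ)

/-- The lattice `L` is unimodular: the Gram matrix of some `ℤ`-basis has determinant 1. -/
def IsUnimodularLat (L : Submodule ℤ V) : Prop :=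
  ∃ (n : ℕ) (b : Basis (Fin n) ℤ L),
    (Matrix.of fun i j : Fin n => ⟪(b i : V), (b j : V)⟫).det = 1

/-- The minimum norm `μ(L)` of a lattice. -/
def minNorm (L : Submodule ℤ V) : ℝ :=
  sInf {r : ℝ | ∃ x ∈ L, x ≠ 0 ∧ ⟪x, x⟫ = r}

/-- `√2·Υ` is an even unimodular lattice: all norms of `Υ` are integers, all doubled inner
products are integers, and the Gram matrix of the form `2⟪·,·⟫` on a `ℤ`-basis of `Υ` has
determinant 1. -/
def SqrtTwoEvenUnimod (Υ : Submodule ℤ V) : Prop :=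
  (∀ x ∈ Υ, ∃ n : ℤ, ⟪x, x⟫ = (n : ℝ)) ∧
  (∀ x ∈ Υ, ∀ y ∈ Υ, ∃ n : ℤ, 2 * ⟪x, y⟫ = (n : ℝ)) ∧
  ∃ (n : ℕ) (b : Basis (Fin n) ℤ Υ),
    (Matrix.of fun i j : Fin n => 2 * ⟪(b i : V), (b j : V)⟫).det = 1

/-- `M, N` is a polarization of `Υ`: a pair of integral sublattices with
`M + N = Υ` and `M ∩ N = 2Υ`. -/
def IsPolarization (Υ M N : Submodule ℤ V) : Prop :=
  M ≤ Υ ∧ N ≤ Υ ∧ IsIntegralLat M ∧ IsIntegralLat N ∧ M ⊔ N = Υ ∧ M ⊓ N = (2 : ℤ) • Υ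

/-- The sublattice `L_M = {(x_1,…,x_k) ∈ M^k : x_1+⋯+x_k ∈ M ∩ N}` of `V^k`. -/
def LsubM (M N : Submodule ℤ V) (k : ℕ) : Submodule ℤ (PiLp 2 fun _ : Fin k => V) where
  carrier := {v | (∀ i, v i ∈ M) ∧ (∑ i, v i) ∈ M ⊓ N}
  add_mem' := fun {a b} ha hb =>
    ⟨fun i => M.add_mem (ha.1 i) (hb.1 i), by
      have h : (∑ i, (a + b) i) = (∑ i, a i) + ∑ i, b i :=
        (Finset.sum_congr rfl fun i _ => rfl).trans Finset.sum_add_distrib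
      rw [h]; exact (M ⊓ N).add_mem ha.2 hb.2⟩
  zero_mem' := ⟨fun _ => M.zero_mem, by
      have h : (∑ i : Fin k, (0 : PiLp 2 fun _ : Fin k => V) i) = 0 :=
        Finset.sum_eq_zero fun _ _ => rfl
      rw [h]; exact (M ⊓ N).zero_mem⟩
  smul_mem' := fun c a ha =>
    ⟨fun i => M.smul_mem c (ha.1 i), by
      have h : (∑ i, (c • a) i) = c • ∑ i, a i := by
        show (∑ i, c • a i) = c • ∑ i, a i
        exact Finset.smul_sum.symm
      rw [h]; exact (M ⊓ N).smul_mem c ha.2⟩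

/-- The diagonal sublattice `L^N = {(y,…,y) : y ∈ N}` of `V^k`. -/
def LsupN (N : Submodule ℤ V) (k : ℕ) : Submodule ℤ (PiLp 2 fun _ : Fin k => V) where
  carrier := {v | ∃ y ∈ N, ∀ i, v i = y}
  add_mem' := fun {a b} ha hb => by
    obtain ⟨ya, hya, ha⟩ := ha
    obtain ⟨yb, hyb, hb⟩ := hb
    exact ⟨ya + yb, N.add_mem hya hyb, fun i => by
      show a i + b i = ya + yb
      rw [ha i, hb i]⟩
  zero_mem' := ⟨0, N.zero_mem, fun _ => rfl⟩
  smul_mem' := fun c a ha => by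
    obtain ⟨y, hy, h⟩ := ha
    exact ⟨c • y, N.smul_mem c hy, fun i => by
      show c • a i = c • y
      rw [h i]⟩

/-- The lattice `L(M,N,k) = L_M + L^N ⊆ V^k`. -/
def LMN (M N : Submodule ℤ V) (k : ℕ) : Submodule ℤ (PiLp 2 fun _ : Fin k => V) :=
  LsubM M N k ⊔ LsupN N k

/-- The Leech polarization setup: `V` is 24-dimensional, `√2·Υ` is even unimodular with
minimum norm 4, and `M, N` is a polarization of `Υ` by two copies of the Leech lattice. -/
def LeechSetup (Υ M N : Submodule ℤ V) : Prop :=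
  Module.finrank ℝ V = 24 ∧ IsLat Υ ∧ SqrtTwoEvenUnimod Υ ∧
  (∀ v ∈ Υ, v ≠ 0 → 4 ≤ 2 * ⟪v, v⟫) ∧
  IsPolarization Υ M N ∧
  IsLat M ∧ IsEvenLat M ∧ IsUnimodularLat M ∧ minNorm M = 4 ∧
  IsLat N ∧ IsEvenLat N ∧ IsUnimodularLat N ∧ minNorm N = 4

/-- `(w,x,y,z) ∈ N × M × M × M` is admissible if `x + y + z ∈ M ∩ N`. -/
def Admissible (M N : Submodule ℤ V) (w x y z : V) : Prop :=
  w ∈ N ∧ x ∈ M ∧ y ∈ M ∧ z ∈ M ∧ x + y + z ∈ M ⊓ N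

/-- An offender is an admissible quadruple all three of whose associated vectors
`w+x, w+y, w+z` have norm 2. -/
def Offender (M N : Submodule ℤ V) (w x y z : V) : Prop :=
  Admissible M N w x y z ∧
  ⟪w + x, w + x⟫ = 2 ∧ ⟪w + y, w + y⟫ = 2 ∧ ⟪w + z, w + z⟫ = 2

/-- A super offender is an offender with `⟪w,w⟫ = 4` whose multiset of norms
`{⟪x,x⟫, ⟪y,y⟫, ⟪z,z⟫}` equals `{6,6,4}`. -/
def SuperOffender (M N : Submodule ℤ V) (w x y z : V) : Prop :=
  Offender M N w x y z ∧ ⟪w, w⟫ = 4 ∧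
  ({⟪x, x⟫, ⟪y, y⟫, ⟪z, z⟫} : Multiset ℝ) = ({6, 6, 4} : Multiset ℝ)

theorem minNorm_le_of_mem {W : Type*} [NormedAddCommGroup W] [InnerProductSpace ℝ W]
    (L : Submodule ℤ W) {x : W} (hx : x ∈ L) (h0 : x ≠ 0) : minNorm L ≤ ⟪x, x⟫ := by
  refine csInf_le ⟨0, ?_⟩ ⟨x, hx, h0, rfl⟩
  rintro r ⟨y, _, _, rfl⟩
  exact real_inner_self_nonneg

theorem norm_bound_aux (Υ M N : Submodule ℤ V) (hpol : IsPolarization Υ M N) (k : ℕ)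
    (v : PiLp 2 fun _ : Fin k => V) (hv : v ∈ LMN M N k) (hv0 : v ≠ 0) :
    min ((k : ℝ) * minNorm Υ) (2 * min (minNorm M) (2 * minNorm Υ)) ≤ ⟪v, v⟫ := by
  obtain ⟨hM, hN, -, -, -, hMN⟩ := hpol
  obtain ⟨a, ⟨haM, haS⟩, b, ⟨y, hy, hb⟩, hab⟩ := Submodule.mem_sup.1 hv
  have hvi : ∀ i, v i = a i + y := fun i => by
    rw [← hab, ← hb i]; rfl
  rw [PiLp.inner_apply]
  by_cases hz : ∀ i, v i ≠ 0
  · refine (min_le_left _ _).trans ?_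
    have : ∑ _i : Fin k, minNorm Υ ≤ ∑ i, ⟪v i, v i⟫ := by
      refine Finset.sum_le_sum fun i _ => minNorm_le_of_mem Υ ?_ (hz i)
      rw [hvi]
      exact Υ.add_mem (hM (haM i)) (hN hy)
    simpa using this
  · refine (min_le_right _ _).trans ?_
    push Not at hz
    obtain ⟨j, hj⟩ := hz
    have hyM : y ∈ M := by
      have h : y = -a j := by
        rw [hvi] at hj
        exact (neg_eq_of_add_eq_zero_right hj).symm
      rw [h]; exact M.neg_mem (haM j)
    have hvM : ∀ i, v i ∈ M := fun i => by
      rw [hvi]; exact M.add_mem (haM i) hyM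
    have hsum : ∑ i, v i ∈ M ⊓ N := by
      have : ∑ i, v i = ∑ i, a i + k • y := by
        simp [hvi, Finset.sum_add_distrib]
      rw [this]
      exact (M ⊓ N).add_mem haS ((M ⊓ N).smul_of_tower_mem k ⟨hyM, hy⟩)
    obtain ⟨p, hp⟩ : ∃ p, v p ≠ 0 := by
      by_contra! h
      exact hv0 (PiLp.ext h)
    have hnn : ∀ i, 0 ≤ ⟪v i, v i⟫ := fun i => real_inner_self_nonneg
    by_cases hq : ∃ q, q ≠ p ∧ v q ≠ 0
    · obtain ⟨q, hqp, hq⟩ := hq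
      have h1 := minNorm_le_of_mem M (hvM p) hp
      have h2 := minNorm_le_of_mem M (hvM q) hq
      have h3 : ∑ i ∈ ({q, p} : Finset (Fin k)), ⟪v i, v i⟫ ≤ ∑ i, ⟪v i, v i⟫ :=
        Finset.sum_le_sum_of_subset_of_nonneg (Finset.subset_univ _) fun i _ _ => hnn i
      rw [Finset.sum_pair hqp] at h3
      have h4 := min_le_left (minNorm M) (2 * minNorm Υ)
      linarith
    · push Not at hq
      rw [Finset.sum_eq_single p (fun i _ h => hq i h) (by simp), hMN] at hsum
      obtain ⟨z, hz, hzp⟩ := (Submodule.mem_smul_pointwise_iff_exists _ _ _).1 hsum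
      have hz0 : z ≠ 0 := by
        rintro rfl
        exact hp (by rw [← hzp, smul_zero])
      have h1 := minNorm_le_of_mem Υ hz hz0
      have h2 : ⟪v p, v p⟫ = 4 * ⟪z, z⟫ := by
        rw [← hzp, two_smul, inner_add_left, inner_add_right]; ring
      have h3 : ⟪v p, v p⟫ ≤ ∑ i, ⟪v i, v i⟫ :=
        Finset.single_le_sum (f := fun i => ⟪v i, v i⟫) (fun i _ => hnn i) (Finset.mem_univ p)
      have h4 := min_le_right (minNorm M) (2 * minNorm Υ)
      linarith

/-- `μ(L(M,N,k)) ≥ min(k·μ(Υ), 2·min(μ(M), 2μ(Υ)))`. -/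
theorem statement5 (Υ M N : Submodule ℤ V) (hΥlat : IsLat Υ)
    (hΥ : SqrtTwoEvenUnimod Υ) (hpol : IsPolarization Υ M N) (k : ℕ) (hk : 2 ≤ k) :
    min ((k : ℝ) * minNorm Υ) (2 * min (minNorm M) (2 * minNorm Υ)) ≤
      minNorm (LMN M N k) := by
  by_cases hne : ∃ v ∈ LMN M N k, v ≠ 0
  · obtain ⟨v, hv, hv0⟩ := hne
    refine le_csInf ⟨_, v, hv, hv0, rfl⟩ ?_
    rintro r ⟨w, hw, hw0, rfl⟩
    exact norm_bound_aux Υ M N hpol k w hw hw0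
  · push Not at hne
    have hbot : ∀ z ∈ Υ, z = 0 := by
      intro z hz
      have h2 : (2 : ℤ) • z ∈ M ⊓ N := by
        rw [hpol.2.2.2.2.2]
        exact (Submodule.mem_smul_pointwise_iff_exists _ _ _).2 ⟨z, hz, rfl⟩
      let j : Fin k := ⟨0, by omega⟩
      let v : PiLp 2 fun _ : Fin k => V := WithLp.toLp 2 (Pi.single j ((2 : ℤ) • z))
      have hvi : ∀ i, v i = (Pi.single j ((2 : ℤ) • z) : Fin k → V) i := fun i => rfl
      have hv : v ∈ LMN M N k := by
        refine Submodule.mem_sup_left ⟨fun i => ?_, ?_⟩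
        · rw [hvi]
          by_cases h : i = j
          · rw [h, Pi.single_eq_same]; exact h2.1
          · rw [Pi.single_eq_of_ne h]; exact M.zero_mem
        · have : ∑ i, v i = (2 : ℤ) • z := by
            simp only [hvi]
            exact Finset.sum_pi_single' j _ _ |>.trans (by simp) 
          rw [this]; exact h2
      have h0 : v j = 0 := by rw [hne v hv]; rfl
      rw [hvi, Pi.single_eq_same, two_smul, ← two_smul ℝ] at h0
      simpa using h0
    have hΥ0 : minNorm Υ = 0 := by
      have : {r : ℝ | ∃ x ∈ Υ, x ≠ 0 ∧ ⟪x, x⟫ = r} = ∅ := by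
        ext r
        simp only [Set.mem_setOf_eq, Set.mem_empty_iff_false, iff_false]
        rintro ⟨x, hx, hx0, -⟩
        exact hx0 (hbot x hx)
      rw [minNorm, this, Real.sInf_empty]
    refine (min_le_left _ _).trans ?_
    rw [hΥ0, mul_zero]
    refine Real.sInf_nonneg ?_
    rintro r ⟨w, -, -, rfl⟩
    exact real_inner_self_nonneg
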